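/- Let f : ℝ^D × ℝ^{d'} → ℝ be ℓ-Lipschitz smooth; for α > 0 define f_α(x, y) := E_v[f(x + αv, y)], with v uniform on the closed Euclidean ball of radius √D in ℝ^D. Fix x ∈ ℝ^D and y ∈ ℝ^{d'}; suppose y ↦ f(x, y) has a unique maximizer y*(x), set g(x) := f(x, y*(x)), and assume ∇g(x) = ∇_x f(x, y*(x)). Let H be a symmetric positive semidefinite D×D matrix and γ ≥ 1 such that g satisfies the quadratic upper bound g(x − w) ≤ g(x) − ⟨∇g(x), w⟩ + (1/2)wᵀHw for all w ∈ ℝ^D. Let Ĝ be a random vector with E[Ĝ] = ∇_x f_α(x, y) and E[ĜᵀHĜ] ≤ ℓγ·E[‖G_ξ‖²], where G_ξ is a random vector with E[G_ξ] = ∇_x f(x, y) and E[‖G_ξ − ∇_x f(x, y)‖²] ≤ σ²/B. Then, with step size ζ = 1/(2ℓγ) and update x⁺ := x − ζĜ, one has ‖∇_x f(x, y)‖² ≤ 16ℓγ·(g(x) − E[g(x⁺)]) + 16ℓ²·‖y − y*(x)‖² + 2σ²/B + (11/2)·α²ℓ²D³. -/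

import Mathlib

open MeasureTheory Metric RealInnerProductSpace

/-- The uniform probability measure on the closed Euclidean ball of radius `√D`
centered at the origin in `ℝ^D`. -/
noncomputable def uniformBall (D : ℕ) : Measure (EuclideanSpace ℝ (Fin D)) :=
  (volume (closedBall (0 : EuclideanSpace ℝ (Fin D)) (Real.sqrt D)))⁻¹ •
    volume.restrict (closedBall (0 : EuclideanSpace ℝ (Fin D)) (Real.sqrt D))

/-- `ℝ^D × ℝ^{d'}` with the Euclidean (`L²`) product norm. -/
abbrev EuclideanProd (D d' : ℕ) :=
  WithLp 2 (EuclideanSpace ℝ (Fin D) × EuclideanSpace ℝ (Fin d'))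

/-- The point of `ℝ^D × ℝ^{d'}` (with the Euclidean product norm) with components `x, y`. -/
noncomputable def euclidPair {D d' : ℕ} (x : EuclideanSpace ℝ (Fin D))
    (y : EuclideanSpace ℝ (Fin d')) : EuclideanProd D d' :=
  (WithLp.equiv 2 (EuclideanSpace ℝ (Fin D) × EuclideanSpace ℝ (Fin d'))).symm (x, y)

/-!
By the quadratic upper bound, the expected step `x⁺ = x - ζ Ĝ` decreases `g` by `ζ ⟪p, m⟫`, where
`p = ∇g(x) = ∇ₓ f(x, y*(x))` and `m = E[Ĝ]`, up to the second-order term `ζ² E[ĜᵀHĜ] / 2`. Both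
`p` and `m` are perturbations of `a = ∇ₓ f(x, y)`: smoothness gives `‖p - a‖ ≤ ℓ ‖y - y*(x)‖`, and
since `m` is the average of `∇ₓ f(x + αv, y)` over the ball, `‖m - a‖ ≤ ℓ α √D`. Completing a square
then bounds `8 ⟪p, m⟫` below by `3 ‖a‖²` minus multiples of the squared errors. At the same scale
(after multiplication by `16ℓγ = 8 / ζ`), the second-order term costs at most
`2 E[‖G_ξ‖²] ≤ 2 (‖a‖² + σ²/B)`, so that one `‖a‖²` is left over.
-/

open ProbabilityTheory
open WithLp (toLp)
open scoped NNReal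

section Gradient

variable {E F : Type*} [NormedAddCommGroup E] [InnerProductSpace ℝ E] [CompleteSpace E]

theorem norm_gradient_sub_gradient (f g : E → ℝ) (x y : E) :
    ‖gradient f x - gradient g y‖ = ‖fderiv ℝ f x - fderiv ℝ g y‖ := by
  rw [← toDual_gradient, ← toDual_gradient, ← map_sub, LinearIsometryEquiv.norm_map]

theorem lipschitzWith_gradient_iff {f : E → ℝ} {K : ℝ≥0} :
    LipschitzWith K (gradient f) ↔ LipschitzWith K (fderiv ℝ f) := by
  simp only [lipschitzWith_iff_norm_sub_le, norm_gradient_sub_gradient]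

/-- The partial gradient `∇ₓ f (x, y)` with respect to the first block of variables. The product
carries the `L²` norm, so that it is a Hilbert space and `f` has a full gradient as well. -/
noncomputable def gradientFst (f : WithLp 2 (E × F) → ℝ) (x : E) (y : F) : E :=
  gradient (fun u => f (toLp 2 (u, y))) x

variable [NormedAddCommGroup F] [InnerProductSpace ℝ F] [CompleteSpace F]

theorem hasGradientAt_comp_toLp_prodMk {f : WithLp 2 (E × F) → ℝ} {f' : WithLp 2 (E × F)}
    {x : E} {y : F} (h : HasGradientAt f f' (toLp 2 (x, y))) :
    HasGradientAt (fun u => f (toLp 2 (u, y))) f'.fst x := by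
  rw [hasGradientAt_iff_hasFDerivAt] at h ⊢
  have inclusion := ((WithLp.prodContinuousLinearEquiv 2 ℝ E F).symm.hasFDerivAt).comp x
    (hasFDerivAt_prodMk_left (𝕜 := ℝ) x y)
  refine (h.comp x inclusion).congr_fderiv ?_
  ext v
  simp

theorem gradientFst_eq_fst_gradient {f : WithLp 2 (E × F) → ℝ} (hf : Differentiable ℝ f)
    (x : E) (y : F) : gradientFst f x y = (gradient f (toLp 2 (x, y))).fst :=
  (hasGradientAt_comp_toLp_prodMk (hf _).hasGradientAt).gradient

theorem norm_gradientFst_sub_le {f : WithLp 2 (E × F) → ℝ} {K : ℝ≥0} (hf : Differentiable ℝ f)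
    (hlip : LipschitzWith K (gradient f)) (x x' : E) (y y' : F) :
    ‖gradientFst f x y - gradientFst f x' y'‖ ≤ K * ‖toLp 2 (x - x', y - y')‖ := by
  rw [gradientFst_eq_fst_gradient hf, gradientFst_eq_fst_gradient hf, ← WithLp.sub_fst]
  exact (WithLp.norm_fst_le _ _).trans (hlip.norm_sub_le _ _)

theorem lipschitzWith_gradientFst_left {f : WithLp 2 (E × F) → ℝ} {K : ℝ≥0}
    (hf : Differentiable ℝ f) (hlip : LipschitzWith K (gradient f)) (y : F) :
    LipschitzWith K (gradientFst f · y) :=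
  LipschitzWith.of_dist_le_mul fun x x' => by
    simpa only [dist_eq_norm, sub_self, WithLp.norm_toLp_fst] using
      norm_gradientFst_sub_le hf hlip x x' y y

theorem lipschitzWith_gradientFst_right {f : WithLp 2 (E × F) → ℝ} {K : ℝ≥0}
    (hf : Differentiable ℝ f) (hlip : LipschitzWith K (gradient f)) (x : E) :
    LipschitzWith K (gradientFst f x) :=
  LipschitzWith.of_dist_le_mul fun y y' => by
    simpa only [dist_eq_norm, sub_self, WithLp.norm_toLp_snd] using
      norm_gradientFst_sub_le hf hlip x x y y'

end Gradient

section RandomShift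

variable {E G Ω : Type*} [NormedAddCommGroup E] [NormedAddCommGroup G] [MeasurableSpace Ω]
  {μ : Measure Ω} {K : ℝ≥0} {X : Ω → E}

theorem integrable_comp_const_add_of_lipschitzWith [IsFiniteMeasure μ] {h : E → G}
    (hlip : LipschitzWith K h) (hX : Integrable X μ) (x : E) :
    Integrable (fun ω => h (x + X ω)) μ := by
  refine ((integrable_const ‖h x‖).add (hX.norm.const_mul K)).mono'
    (hlip.continuous.comp_aestronglyMeasurable (hX.1.const_add x)) (.of_forall fun ω => ?_)
  have deviation := hlip.norm_sub_le (x + X ω) x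
  rw [add_sub_cancel_left] at deviation
  exact (norm_le_norm_add_norm_sub' _ (h x)).trans (by simpa using deviation)

variable [NormedSpace ℝ E] [NormedSpace ℝ G] {φ : E → G}

theorem hasFDerivAt_integral_comp_add [IsFiniteMeasure μ] (hφ : Differentiable ℝ φ)
    (hlip : LipschitzWith K (fderiv ℝ φ)) (hX : Integrable X μ) {x : E}
    (hφX : Integrable (fun ω => φ (x + X ω)) μ) :
    HasFDerivAt (fun u => ∫ ω, φ (u + X ω) ∂μ) (∫ ω, fderiv ℝ φ (x + X ω) ∂μ) x := by
  have hφ' := integrable_comp_const_add_of_lipschitzWith hlip hX x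
  refine hasFDerivAt_integral_of_dominated_of_fderiv_le (F' := fun u ω => fderiv ℝ φ (u + X ω))
    (bound := fun ω => ‖fderiv ℝ φ (x + X ω)‖ + K) (ball_mem_nhds x one_pos)
    (.of_forall fun u => hφ.continuous.comp_aestronglyMeasurable (hX.1.const_add u)) hφX hφ'.1
    (.of_forall fun ω u hu => ?_) (hφ'.norm.add (integrable_const _))
    (.of_forall fun ω u _ => (hasFDerivAt_comp_add_right _).2 (hφ _).hasFDerivAt)
  have deviation := hlip.norm_sub_le (u + X ω) (x + X ω)
  rw [add_sub_add_right_eq_sub] at deviation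
  have hux : K * ‖u - x‖ ≤ K := mul_le_of_le_one_right K.2 (mem_ball_iff_norm.1 hu).le
  exact (norm_le_norm_add_norm_sub' _ _).trans (by gcongr; exact deviation.trans hux)

theorem norm_fderiv_integral_comp_add_sub_le [IsProbabilityMeasure μ] [CompleteSpace G]
    (hφ : Differentiable ℝ φ) (hlip : LipschitzWith K (fderiv ℝ φ)) (hX : Integrable X μ) {x : E}
    (hφX : Integrable (fun ω => φ (x + X ω)) μ) :
    ‖fderiv ℝ (fun u => ∫ ω, φ (u + X ω) ∂μ) x - fderiv ℝ φ x‖ ≤ K * ∫ ω, ‖X ω‖ ∂μ := by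
  have hφ' := integrable_comp_const_add_of_lipschitzWith hlip hX x
  calc ‖fderiv ℝ (fun u => ∫ ω, φ (u + X ω) ∂μ) x - fderiv ℝ φ x‖
      = ‖∫ ω, (fderiv ℝ φ (x + X ω) - fderiv ℝ φ x) ∂μ‖ := by
        rw [(hasFDerivAt_integral_comp_add hφ hlip hX hφX).fderiv,
          integral_sub hφ' (integrable_const _), integral_const, probReal_univ, one_smul]
    _ ≤ ∫ ω, K * ‖X ω‖ ∂μ :=
        norm_integral_le_of_norm_le (hX.norm.const_mul _) (.of_forall fun ω => by
          simpa only [add_sub_cancel_left] using hlip.norm_sub_le (x + X ω) x)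
    _ = K * ∫ ω, ‖X ω‖ ∂μ := integral_const_mul _ _

end RandomShift

section UniformBall

variable {D : ℕ}

theorem uniformBall_eq_cond (D : ℕ) :
    uniformBall D = volume[|closedBall (0 : EuclideanSpace ℝ (Fin D)) √D] := rfl

theorem volume_closedBall_sqrt_ne_zero (D : ℕ) :
    volume (closedBall (0 : EuclideanSpace ℝ (Fin D)) √D) ≠ 0 := by
  rcases D.eq_zero_or_pos with rfl | hD
  · simpa using (isOpen_discrete _).measure_ne_zero volume
      (Set.singleton_nonempty (0 : EuclideanSpace ℝ (Fin 0)))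
  · exact (measure_closedBall_pos _ _ (Real.sqrt_pos.2 (by exact_mod_cast hD))).ne'

instance isProbabilityMeasure_uniformBall : IsProbabilityMeasure (uniformBall D) :=
  uniformBall_eq_cond D ▸ cond_isProbabilityMeasure_of_finite (volume_closedBall_sqrt_ne_zero D)
    measure_closedBall_lt_top.ne

theorem ae_norm_le_uniformBall (D : ℕ) : ∀ᵐ v ∂uniformBall D, ‖v‖ ≤ √D := by
  rw [uniformBall_eq_cond]
  filter_upwards [ae_cond_mem measurableSet_closedBall] with v hv
  exact mem_closedBall_zero_iff.1 hv

theorem integrable_uniformBall_of_continuous {G : Type*} [NormedAddCommGroup G]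
    {h : EuclideanSpace ℝ (Fin D) → G} (hh : Continuous h) : Integrable h (uniformBall D) :=
  (hh.continuousOn.integrableOn_compact (isCompact_closedBall _ _)).integrable.smul_measure
    (ENNReal.inv_ne_top.2 (volume_closedBall_sqrt_ne_zero D))

theorem norm_gradient_smoothing_sub_le {φ : EuclideanSpace ℝ (Fin D) → ℝ} {K : ℝ≥0}
    (hφ : Differentiable ℝ φ) (hlip : LipschitzWith K (gradient φ)) (α : ℝ)
    (x : EuclideanSpace ℝ (Fin D)) :
    ‖gradient (fun u => ∫ v, φ (u + α • v) ∂uniformBall D) x - gradient φ x‖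
      ≤ K * (|α| * √D) := by
  have hφc := hφ.continuous
  have mean_norm_le : ∫ v, ‖α • v‖ ∂uniformBall D ≤ |α| * √D :=
    calc ∫ v, ‖α • v‖ ∂uniformBall D
        ≤ ∫ _, |α| * √D ∂uniformBall D := by
          refine integral_mono_ae (integrable_uniformBall_of_continuous (by fun_prop))
            (integrable_const _) ?_
          filter_upwards [ae_norm_le_uniformBall D] with v hv
          rw [norm_smul, Real.norm_eq_abs]
          gcongr
      _ = |α| * √D := by rw [integral_const, probReal_univ, one_smul]
  rw [norm_gradient_sub_gradient]
  exact (norm_fderiv_integral_comp_add_sub_le hφ (lipschitzWith_gradient_iff.1 hlip)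
    (integrable_uniformBall_of_continuous (by fun_prop))
    (integrable_uniformBall_of_continuous (by fun_prop))).trans (by gcongr)

end UniformBall

section Descent

variable {E Ω : Type*} [NormedAddCommGroup E] [InnerProductSpace ℝ E]
  [MeasurableSpace Ω] {μ : Measure Ω} [IsProbabilityMeasure μ]

theorem three_mul_norm_sq_le (a p m : E) :
    3 * ‖a‖ ^ 2 ≤ 8 * ⟪p, m⟫ + 16 * ‖a - p‖ ^ 2 + 11 / 2 * ‖m - a‖ ^ 2 := by
  obtain ⟨δ, rfl⟩ : ∃ δ, p = a + δ := ⟨p - a, by abel⟩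
  obtain ⟨ε, rfl⟩ : ∃ ε, m = a + ε := ⟨m - a, by abel⟩
  have sum_of_squares : 8 * ⟪a + δ, a + ε⟫ + 16 * ‖δ‖ ^ 2 + 11 / 2 * ‖ε‖ ^ 2 - 3 * ‖a‖ ^ 2
      = 1 / 5 * ‖(5 : ℝ) • a + (4 : ℝ) • (δ + ε)‖ ^ 2 + 4 / 5 * ‖δ + ε‖ ^ 2
        + 12 * ‖δ‖ ^ 2 + 3 / 2 * ‖ε‖ ^ 2 := by
    simp only [← real_inner_self_eq_norm_sq, inner_add_left, inner_add_right, real_inner_smul_left,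
      real_inner_smul_right, real_inner_comm a δ, real_inner_comm a ε, real_inner_comm δ ε]
    ring
  rw [sub_add_cancel_left, norm_neg, add_sub_cancel_left, ← sub_nonneg, sum_of_squares]
  positivity

variable [CompleteSpace E]

theorem integral_norm_sub_integral_sq {X : Ω → E} (hX : MemLp X 2 μ) :
    ∫ ω, ‖X ω - ∫ ω', X ω' ∂μ‖ ^ 2 ∂μ = ∫ ω, ‖X ω‖ ^ 2 ∂μ - ‖∫ ω, X ω ∂μ‖ ^ 2 := by
  have hX_int : Integrable X μ := hX.integrable one_le_two
  have hX_sq : Integrable (fun ω => ‖X ω‖ ^ 2) μ := (memLp_two_iff_integrable_sq_norm hX.1).1 hX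
  set a := ∫ ω, X ω ∂μ
  have hcross : Integrable (fun ω => 2 * ⟪a, X ω⟫) μ := (hX_int.const_inner a).const_mul 2
  have hsub : Integrable (fun ω => ‖X ω‖ ^ 2 - 2 * ⟪a, X ω⟫) μ := hX_sq.sub hcross
  calc ∫ ω, ‖X ω - a‖ ^ 2 ∂μ
      = ∫ ω, (‖X ω‖ ^ 2 - 2 * ⟪a, X ω⟫ + ‖a‖ ^ 2) ∂μ := by
        simp only [norm_sub_sq_real, real_inner_comm a]
    _ = ∫ ω, ‖X ω‖ ^ 2 ∂μ - 2 * ⟪a, a⟫ + ‖a‖ ^ 2 := by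
        rw [integral_add hsub (integrable_const _), integral_sub hX_sq hcross,
          integral_const_mul, integral_inner hX_int, integral_const, probReal_univ, one_smul]
    _ = ∫ ω, ‖X ω‖ ^ 2 ∂μ - ‖a‖ ^ 2 := by rw [real_inner_self_eq_norm_sq]; ring

variable {g : E → ℝ} {x p : E} {Q : QuadraticForm ℝ E} {G : Ω → E}

theorem integral_comp_sub_smul_le
    (hquad : ∀ w, g (x - w) ≤ g x - ⟪p, w⟫ + 1 / 2 * Q w)
    (hG : Integrable G μ) (hQG : Integrable (fun ω => Q (G ω)) μ) {t : ℝ}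
    (hgG : Integrable (fun ω => g (x - t • G ω)) μ) :
    ∫ ω, g (x - t • G ω) ∂μ
      ≤ g x - t * ⟪p, ∫ ω, G ω ∂μ⟫ + t ^ 2 / 2 * ∫ ω, Q (G ω) ∂μ := by
  have hlin : Integrable (fun ω => t * ⟪p, G ω⟫) μ := (hG.const_inner p).const_mul t
  have hsub : Integrable (fun ω => g x - t * ⟪p, G ω⟫) μ := (integrable_const _).sub hlin
  calc ∫ ω, g (x - t • G ω) ∂μ
      ≤ ∫ ω, (g x - t * ⟪p, G ω⟫ + t ^ 2 / 2 * Q (G ω)) ∂μ := by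
        refine integral_mono hgG (hsub.add (hQG.const_mul _)) fun ω => ?_
        refine (hquad (t • G ω)).trans_eq ?_
        simp only [real_inner_smul_right, QuadraticMap.map_smul, smul_eq_mul]
        ring
    _ = g x - t * ⟪p, ∫ ω, G ω ∂μ⟫ + t ^ 2 / 2 * ∫ ω, Q (G ω) ∂μ := by
        rw [integral_add hsub (hQG.const_mul _), integral_sub (integrable_const _) hlin,
          integral_const_mul, integral_const_mul, integral_inner hG, integral_const,
          probReal_univ, one_smul]

theorem norm_sq_le_of_stochastic_step {L V : ℝ} {X : Ω → E} (hL : 0 < L)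
    (hquad : ∀ w, g (x - w) ≤ g x - ⟪p, w⟫ + 1 / 2 * Q w)
    (hG : Integrable G μ) (hQG : Integrable (fun ω => Q (G ω)) μ)
    (hgG : Integrable (fun ω => g (x - (1 / (2 * L)) • G ω)) μ)
    (hX : MemLp X 2 μ) (hvar : ∫ ω, ‖X ω - ∫ ω', X ω' ∂μ‖ ^ 2 ∂μ ≤ V)
    (hmoment : ∫ ω, Q (G ω) ∂μ ≤ L * ∫ ω, ‖X ω‖ ^ 2 ∂μ) :
    ‖∫ ω, X ω ∂μ‖ ^ 2
      ≤ 16 * L * (g x - ∫ ω, g (x - (1 / (2 * L)) • G ω) ∂μ)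
        + 16 * ‖∫ ω, X ω ∂μ - p‖ ^ 2 + 2 * V
        + 11 / 2 * ‖∫ ω, G ω ∂μ - ∫ ω, X ω ∂μ‖ ^ 2 := by
  set a := ∫ ω, X ω ∂μ
  set m := ∫ ω, G ω ∂μ
  have hQ_le : ∫ ω, Q (G ω) ∂μ ≤ L * (‖a‖ ^ 2 + V) := by
    rw [integral_norm_sub_integral_sq hX] at hvar
    refine hmoment.trans ?_
    gcongr
    linarith
  have descent : 8 * ⟪p, m⟫
      ≤ 16 * L * (g x - ∫ ω, g (x - (1 / (2 * L)) • G ω) ∂μ) + 2 * (‖a‖ ^ 2 + V) := by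
    have step_le := integral_comp_sub_smul_le hquad hG hQG hgG
    grw [hQ_le] at step_le
    calc 8 * ⟪p, m⟫
        = 16 * L * (g x - (g x - 1 / (2 * L) * ⟪p, m⟫
            + (1 / (2 * L)) ^ 2 / 2 * (L * (‖a‖ ^ 2 + V)))) + 2 * (‖a‖ ^ 2 + V) := by
          field_simp
          ring
      _ ≤ _ := by gcongr
  linarith [three_mul_norm_sq_le a p m]

end Descent

section EuclideanQuadraticForm

/-- The quadratic form `w ↦ wᵀHw` on Euclidean space; `Matrix.toQuadraticForm'` is only defined on
the function type `Fin D → ℝ`, whose norm is the supremum norm. -/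
noncomputable def euclideanQuadraticForm {D : ℕ} (H : Matrix (Fin D) (Fin D) ℝ) :
    QuadraticForm ℝ (EuclideanSpace ℝ (Fin D)) :=
  H.toQuadraticForm'.comp (WithLp.linearEquiv 2 ℝ (Fin D → ℝ)).toLinearMap

theorem euclideanQuadraticForm_apply {D : ℕ} (H : Matrix (Fin D) (Fin D) ℝ)
    (w : EuclideanSpace ℝ (Fin D)) :
    euclideanQuadraticForm H w = ∑ i, ∑ j, w i * H i j * w j := by
  simp [euclideanQuadraticForm, Matrix.toQuadraticForm', Matrix.toLinearMap₂'_apply, mul_assoc,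
    mul_comm (H _ _)]

end EuclideanQuadraticForm

theorem stmt8_general {D : ℕ} {F : Type*} [NormedAddCommGroup F] [InnerProductSpace ℝ F]
    [CompleteSpace F] {ℓ α γ V : ℝ} (hℓ : 0 < ℓ) (hγ : 0 < γ)
    {f : WithLp 2 (EuclideanSpace ℝ (Fin D) × F) → ℝ} (hdiff : Differentiable ℝ f)
    (hlip : ∀ z₁ z₂, ‖gradient f z₁ - gradient f z₂‖ ≤ ℓ * ‖z₁ - z₂‖)
    {g : EuclideanSpace ℝ (Fin D) → ℝ} {x : EuclideanSpace ℝ (Fin D)} {y y₀ : F}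
    (hgrad : gradient g x = gradientFst f x y₀) {H : Matrix (Fin D) (Fin D) ℝ}
    (hquad : ∀ w, g (x - w) ≤ g x - ⟪gradient g x, w⟫ + 1 / 2 * ∑ i, ∑ j, w i * H i j * w j)
    {Ω : Type*} [MeasurableSpace Ω] {μ : Measure Ω} [IsProbabilityMeasure μ]
    {Ghat Gxi : Ω → EuclideanSpace ℝ (Fin D)} (hGhat : Integrable Ghat μ)
    (hGhatMean : ∫ ω, Ghat ω ∂μ
      = gradient (fun u => ∫ v, f (toLp 2 (u + α • v, y)) ∂uniformBall D) x)
    (hGhatQuad : Integrable (fun ω => ∑ i, ∑ j, Ghat ω i * H i j * Ghat ω j) μ)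
    (hGxi : MemLp Gxi 2 μ) (hGxiMean : ∫ ω, Gxi ω ∂μ = gradientFst f x y)
    (hGxiVar : ∫ ω, ‖Gxi ω - gradientFst f x y‖ ^ 2 ∂μ ≤ V)
    (hmoment : ∫ ω, ∑ i, ∑ j, Ghat ω i * H i j * Ghat ω j ∂μ ≤ ℓ * γ * ∫ ω, ‖Gxi ω‖ ^ 2 ∂μ)
    (hstep : Integrable (fun ω => g (x - (1 / (2 * ℓ * γ)) • Ghat ω)) μ) :
    ‖gradientFst f x y‖ ^ 2
      ≤ 16 * ℓ * γ * (g x - ∫ ω, g (x - (1 / (2 * ℓ * γ)) • Ghat ω) ∂μ)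
        + 16 * ℓ ^ 2 * ‖y - y₀‖ ^ 2 + 2 * V + 11 / 2 * α ^ 2 * ℓ ^ 2 * D := by
  lift ℓ to ℝ≥0 using hℓ.le
  have hlip' : LipschitzWith ℓ (gradient f) := lipschitzWith_iff_norm_sub_le.2 hlip
  have hslice : Differentiable ℝ fun u => f (toLp 2 (u, y)) := fun u =>
    (hasGradientAt_comp_toLp_prodMk (hdiff (toLp 2 (u, y))).hasGradientAt).differentiableAt
  have mismatch : ‖gradientFst f x y - gradientFst f x y₀‖ ≤ ℓ * ‖y - y₀‖ :=
    (lipschitzWith_gradientFst_right hdiff hlip' x).norm_sub_le y y₀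
  have bias : ‖∫ ω, Ghat ω ∂μ - gradientFst f x y‖ ≤ ℓ * (|α| * √D) :=
    hGhatMean ▸ norm_gradient_smoothing_sub_le hslice
      (lipschitzWith_gradientFst_left hdiff hlip' y) α x
  simp only [← euclideanQuadraticForm_apply, hgrad] at hquad hGhatQuad hmoment
  rw [← hGxiMean] at hGxiVar
  rw [mul_assoc 2] at hstep ⊢
  have key := norm_sq_le_of_stochastic_step (mul_pos hℓ hγ) hquad hGhat hGhatQuad hstep hGxi
    hGxiVar hmoment
  rw [hGxiMean] at key
  grw [mismatch, bias] at key
  simp only [mul_pow, sq_abs, Real.sq_sqrt (Nat.cast_nonneg D)] at key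
  linarith

/-- One step of the zeroth-order outer update: under an `H`-weighted
quadratic upper bound on `g x = f (x, y*(x))`, an unbiased surrogate gradient `Ĝ` for
`∇ₓ f_α (x, y)` whose `H`-weighted second moment is controlled by `ℓγ·E[‖G_ξ‖²]`, where
`G_ξ` is an unbiased stochastic gradient of `∇ₓ f (x, y)` with variance `σ²/B`, the update
`x⁺ = x − ζ Ĝ` with `ζ = 1/(2ℓγ)` satisfies
`‖∇ₓ f (x, y)‖² ≤ 16ℓγ (g x − E[g x⁺]) + 16ℓ² ‖y − y*(x)‖² + 2σ²/B + (11/2) α²ℓ²D³`. -/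
theorem stmt8 (D d' : ℕ) (ℓ α γ σ B : ℝ) (hℓ : 0 < ℓ) (hα : 0 < α) (hγ : 1 ≤ γ)
    (hσ : 0 < σ) (hB : 1 ≤ B)
    (f : EuclideanProd D d' → ℝ) (hdiff : Differentiable ℝ f)
    (hlip : ∀ z₁ z₂, ‖gradient f z₁ - gradient f z₂‖ ≤ ℓ * ‖z₁ - z₂‖)
    (x : EuclideanSpace ℝ (Fin D)) (y : EuclideanSpace ℝ (Fin d'))
    (ystar : EuclideanSpace ℝ (Fin D) → EuclideanSpace ℝ (Fin d'))
    (hmax : ∀ y', f (euclidPair x y') ≤ f (euclidPair x (ystar x)))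
    (huniq : ∀ y'', (∀ y', f (euclidPair x y') ≤ f (euclidPair x y'')) → y'' = ystar x)
    (hgradg : gradient (fun x' => f (euclidPair x' (ystar x'))) x
      = gradient (fun x' => f (euclidPair x' (ystar x))) x)
    (H : Matrix (Fin D) (Fin D) ℝ) (hHsymm : H.IsSymm) (hHpsd : H.PosSemidef)
    (hquad : ∀ w : EuclideanSpace ℝ (Fin D),
      f (euclidPair (x - w) (ystar (x - w)))
        ≤ f (euclidPair x (ystar x))
          - ⟪gradient (fun x' => f (euclidPair x' (ystar x'))) x, w⟫
          + 1 / 2 * ∑ i, ∑ j, w i * H i j * w j)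
    (Ω : Type*) [MeasurableSpace Ω] (μ : Measure Ω) [IsProbabilityMeasure μ]
    (Ghat Gxi : Ω → EuclideanSpace ℝ (Fin D))
    (hGhatInt : Integrable Ghat μ)
    (hGhatMean : (∫ ω, Ghat ω ∂μ)
      = gradient (fun x' => ∫ v, f (euclidPair (x' + α • v) y) ∂(uniformBall D)) x)
    (hGhatQuadInt : Integrable (fun ω => ∑ i, ∑ j, Ghat ω i * H i j * Ghat ω j) μ)
    (hGxiInt : Integrable Gxi μ)
    (hGxiSqInt : Integrable (fun ω => ‖Gxi ω‖ ^ 2) μ)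
    (hGxiMean : (∫ ω, Gxi ω ∂μ) = gradient (fun x' => f (euclidPair x' y)) x)
    (hGxiVarInt : Integrable
      (fun ω => ‖Gxi ω - gradient (fun x' => f (euclidPair x' y)) x‖ ^ 2) μ)
    (hGxiVar : (∫ ω, ‖Gxi ω - gradient (fun x' => f (euclidPair x' y)) x‖ ^ 2 ∂μ)
      ≤ σ ^ 2 / B)
    (hHmoment : (∫ ω, ∑ i, ∑ j, Ghat ω i * H i j * Ghat ω j ∂μ)
      ≤ ℓ * γ * ∫ ω, ‖Gxi ω‖ ^ 2 ∂μ)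
    (hPlusInt : Integrable
      (fun ω => f (euclidPair (x - (1 / (2 * ℓ * γ)) • Ghat ω)
        (ystar (x - (1 / (2 * ℓ * γ)) • Ghat ω)))) μ) :
    ‖gradient (fun x' => f (euclidPair x' y)) x‖ ^ 2
      ≤ 16 * ℓ * γ * (f (euclidPair x (ystar x))
          - ∫ ω, f (euclidPair (x - (1 / (2 * ℓ * γ)) • Ghat ω)
              (ystar (x - (1 / (2 * ℓ * γ)) • Ghat ω))) ∂μ)
        + 16 * ℓ ^ 2 * ‖y - ystar x‖ ^ 2 + 2 * σ ^ 2 / B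
        + 11 / 2 * α ^ 2 * ℓ ^ 2 * (D : ℝ) ^ 3 := by
  have hD : (D : ℝ) ≤ (D : ℝ) ^ 3 := mod_cast Nat.le_self_pow three_ne_zero D
  grw [← hD, mul_div_assoc]
  exact stmt8_general hℓ (one_pos.trans_le hγ) hdiff hlip hgradg hquad hGhatInt hGhatMean
    hGhatQuadInt ((memLp_two_iff_integrable_sq_norm hGxiInt.1).2 hGxiSqInt) hGxiMean hGxiVar
    hHmoment hPlusInt
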